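/- Let Ω_t ⊂ ℝ^n be a family of smooth domains moving with smooth velocity field v, and κ(t,x) the mean curvature of ∂Ω_t. Then D_t κ = -Δ_{∂Ω_t} v^⊥ - v^⊥ |Π|^2 + (D·Π)(v^⊤), where v^⊥ = v·N, v^⊤ is the tangential part of v, Π is the second fundamental form, and D·Π is the divergence of Π on ∂Ω_t. -/

import Mathlib

/-!
The proof works in the coordinates `y` throughout. Write `e_i = ∂_i φ`, `V(t, y) = v(t, φ(t, y))`,
`f = ⟨V, N⟩`. Since `∂_t φ = V` and partial derivatives commute (`hasDerivAt_fderiv_slice`),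
`∂_t e_i = ∂_i V` and `∂_t ∂_{ij} φ = ∂_{ij} V`, so with `∂_t g⁻¹ = -g⁻¹ (∂_t g) g⁻¹`
(`fderiv_inv_apply`)

  `∂_t κ = (∂_t g^{ij}) Π_{ij} - g^{ij} (⟨∂_{ij} V, N⟩ + ⟨∂_{ij} φ, ∂_t N⟩)`.

On the other side, in non-divergence form (`lapS_eq`, which rests on Jacobi's formula
`fderiv_det_apply`) `Δ f = g^{ij} (∂_{ij} f - Γ^k_{ij} ∂_k f)`, and `∂_{ij} f` is expanded by the
product rule. The identity `⟨w, u⟩ = ⟨w, N⟩⟨N, u⟩ + g^{kl} ⟨w, e_l⟩⟨e_k, u⟩` of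
`inner_expand_frame`, together with the derivatives of `⟨N, N⟩ = 1` and `⟨N, e_i⟩ = 0`, then
matches the terms:

* `⟨∂_{ij} φ, ∂_t N⟩ = -Γ^k_{ij} ⟨∂_k V, N⟩`, so the terms with `∂_{ij} V` and `⟨∂_k V, N⟩` cancel
  between `∂_t κ` and `-Δ f`;
* `(∂_t g^{ij}) Π_{ij} = -2 g^{ij} ⟨∂_i V, ∂_j N⟩` (`metric_variation_identity`), which cancels the
  mixed terms of `∂_{ij} f`;
* what is left of `∂_t κ + Δ f` is `⟨V, Δ N⟩`, and `⟨V, Δ N⟩ = -f |Π|² + (𝒟·Π)(V^⊤)`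
  (`laplace_normal_identity`) because `⟨N, ∂_{ij} N⟩ = -⟨∂_i N, ∂_j N⟩` and
  `⟨e_k, ∂_{ij} N⟩ = ∂_i Π_{jk} - Γ^l_{ik} Π_{jl}`.
-/

open scoped RealInnerProductSpace

variable {m : ℕ}

/-- Partial derivative of a vector-valued map of surface coordinates. -/
noncomputable def pdv (φ : (Fin m → ℝ) → EuclideanSpace ℝ (Fin (m + 1))) (i : Fin m)
    (y : Fin m → ℝ) : EuclideanSpace ℝ (Fin (m + 1)) :=
  fderiv ℝ φ y (Pi.single i 1)

/-- Partial derivative of a scalar function of surface coordinates. -/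
noncomputable def pds (F : (Fin m → ℝ) → ℝ) (i : Fin m) (y : Fin m → ℝ) : ℝ :=
  fderiv ℝ F y (Pi.single i 1)

/-- The induced metric `g_{ij} = ⟨∂_i φ, ∂_j φ⟩` of a parametrized hypersurface. -/
noncomputable def met (φ : (Fin m → ℝ) → EuclideanSpace ℝ (Fin (m + 1)))
    (y : Fin m → ℝ) : Matrix (Fin m) (Fin m) ℝ :=
  Matrix.of fun i j => ⟪pdv φ i y, pdv φ j y⟫

/-- The inverse metric `g^{ij}`. -/
noncomputable def metInv (φ : (Fin m → ℝ) → EuclideanSpace ℝ (Fin (m + 1)))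
    (y : Fin m → ℝ) : Matrix (Fin m) (Fin m) ℝ := (met φ y)⁻¹

/-- `√(det g)`. -/
noncomputable def sqrtDet (φ : (Fin m → ℝ) → EuclideanSpace ℝ (Fin (m + 1)))
    (y : Fin m → ℝ) : ℝ := Real.sqrt (met φ y).det

/-- The Beltrami-Laplace operator of the induced metric applied to a scalar function `h`
of the surface coordinates: `Δ h = (det g)^{-1/2} ∂_i (√(det g) g^{ij} ∂_j h)`. -/
noncomputable def lapS (φ : (Fin m → ℝ) → EuclideanSpace ℝ (Fin (m + 1)))
    (h : (Fin m → ℝ) → ℝ) (y : Fin m → ℝ) : ℝ :=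
  (sqrtDet φ y)⁻¹ *
    ∑ i, pds (fun z => sqrtDet φ z * ∑ j, metInv φ z i j * pds h j z) i y

/-- The second fundamental form `Π_{ij} = -⟨∂_{ij} φ, N⟩` (so that `Π(w) = ∇_w N`). -/
noncomputable def sffM (φ : (Fin m → ℝ) → EuclideanSpace ℝ (Fin (m + 1)))
    (N : (Fin m → ℝ) → EuclideanSpace ℝ (Fin (m + 1))) (i j : Fin m)
    (y : Fin m → ℝ) : ℝ :=
  -⟪fderiv ℝ (fun z => pdv φ j z) y (Pi.single i 1), N y⟫

/-- The mean curvature `κ = g^{ij} Π_{ij}`. -/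
noncomputable def kap (φ N : (Fin m → ℝ) → EuclideanSpace ℝ (Fin (m + 1)))
    (y : Fin m → ℝ) : ℝ :=
  ∑ i, ∑ j, metInv φ y i j * sffM φ N i j y

/-- The squared norm `|Π|² = g^{ik} g^{jl} Π_{ij} Π_{kl}`. -/
noncomputable def sffNormSq (φ N : (Fin m → ℝ) → EuclideanSpace ℝ (Fin (m + 1)))
    (y : Fin m → ℝ) : ℝ :=
  ∑ i, ∑ j, ∑ k, ∑ l, metInv φ y i k * metInv φ y j l * sffM φ N i j y * sffM φ N k l y

/-- The Christoffel symbols `Γ^k_{ij}` of the induced metric. -/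
noncomputable def chrM (φ : (Fin m → ℝ) → EuclideanSpace ℝ (Fin (m + 1)))
    (k i j : Fin m) (y : Fin m → ℝ) : ℝ :=
  (1/2) * ∑ l, metInv φ y k l *
    (pds (fun z => met φ z l j) i y + pds (fun z => met φ z l i) j y
      - pds (fun z => met φ z i j) l y)

/-- The divergence of the second fundamental form,
`(𝒟·Π)_k = g^{ij} (𝒟_i Π)_{jk}`. -/
noncomputable def divSff (φ N : (Fin m → ℝ) → EuclideanSpace ℝ (Fin (m + 1)))
    (k : Fin m) (y : Fin m → ℝ) : ℝ :=
  ∑ i, ∑ j, metInv φ y i j *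
    (pds (sffM φ N j k) i y - ∑ l, chrM φ l i j y * sffM φ N l k y
      - ∑ l, chrM φ l i k y * sffM φ N j l y)

/-! ### Directional derivatives of determinants and inverse matrices -/

section Matrices

variable {E : Type*} [NormedAddCommGroup E] [NormedSpace ℝ E]

lemma contDiff_det_of_entries {n : WithTop ℕ∞} {k : ℕ} {A : E → Matrix (Fin k) (Fin k) ℝ}
    (hA : ∀ i j, ContDiff ℝ n fun z => A z i j) : ContDiff ℝ n fun z => (A z).det := by
  simp only [Matrix.det_apply]
  exact ContDiff.sum fun σ _ => (contDiff_prod fun i _ => hA _ _).const_smul _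

lemma contDiff_inv_of_entries {n : WithTop ℕ∞} {k : ℕ} {A : E → Matrix (Fin k) (Fin k) ℝ}
    (hA : ∀ i j, ContDiff ℝ n fun z => A z i j) (hdet : ∀ z, (A z).det ≠ 0) (i j : Fin k) :
    ContDiff ℝ n fun z => (A z)⁻¹ i j := by
  simp only [Matrix.inv_def, Matrix.smul_apply, Ring.inverse_eq_inv', smul_eq_mul,
    Matrix.adjugate_apply]
  refine ((contDiff_det_of_entries hA).inv hdet).mul (contDiff_det_of_entries fun a b => ?_)
  by_cases h : a = j
  · subst h
    simp only [Matrix.updateRow_self]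
    exact contDiff_const
  · simp only [Matrix.updateRow_ne h]
    exact hA a b

/-- Jacobi's formula in direction `e`: `∂ det A = det A · tr (A⁻¹ ∂A)`. -/
lemma fderiv_det_apply {k : ℕ} {A : E → Matrix (Fin k) (Fin k) ℝ} {x : E}
    (hA : ∀ i j, DifferentiableAt ℝ (fun z => A z i j) x) (hdet : (A x).det ≠ 0) (e : E) :
    fderiv ℝ (fun z => (A z).det) x e
      = (A x).det * ∑ a, ∑ b, (A x)⁻¹ b a * fderiv ℝ (fun z => A z a b) x e := by
  -- the determinant as a continuous multilinear function of the rows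
  let D : ContinuousMultilinearMap ℝ (fun _ : Fin k => Fin k → ℝ) ℝ :=
    ⟨(Matrix.detRowAlternating (n := Fin k) (R := ℝ)).toMultilinearMap, by
      exact Continuous.matrix_det continuous_id⟩
  have hA' : HasFDerivAt (fun z => (fun i j => A z i j : Fin k → Fin k → ℝ))
      (ContinuousLinearMap.pi fun i => ContinuousLinearMap.pi fun j =>
        fderiv ℝ (fun z => A z i j) x) x :=
    hasFDerivAt_pi.2 fun i => hasFDerivAt_pi.2 fun j => (hA i j).hasFDerivAt
  have h := (D.hasFDerivAt (fun i j => A x i j)).comp x hA'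
  have h2 : fderiv ℝ (fun z => (A z).det) x = _ := h.fderiv
  rw [h2, ContinuousLinearMap.comp_apply, ContinuousMultilinearMap.linearDeriv_apply,
    Finset.mul_sum]
  refine Finset.sum_congr rfl fun a _ => ?_
  change ((A x).updateRow a _).det = _
  rw [← Matrix.cramer_transpose_apply, Matrix.cramer_eq_adjugate_mulVec, Matrix.mulVec,
    dotProduct, Finset.mul_sum]
  refine Finset.sum_congr rfl fun b _ => ?_
  simp only [Matrix.inv_def, Matrix.smul_apply, Ring.inverse_eq_inv', smul_eq_mul,
    ← Matrix.adjugate_transpose, Matrix.transpose_apply]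
  simp only [ContinuousLinearMap.pi_apply]
  field_simp

/-- Derivative of the inverse matrix in direction `e`: `∂ (A⁻¹) = - A⁻¹ (∂A) A⁻¹`, obtained by
differentiating `A⁻¹ A = 1`. -/
lemma fderiv_inv_apply {k : ℕ} {A : E → Matrix (Fin k) (Fin k) ℝ}
    (hA : ∀ i j, ContDiff ℝ 1 (fun z => A z i j)) (hdet : ∀ z, (A z).det ≠ 0) (x e : E)
    (i j : Fin k) :
    fderiv ℝ (fun z => (A z)⁻¹ i j) x e
      = -∑ a, ∑ b, (A x)⁻¹ i a * fderiv ℝ (fun z => A z a b) x e * (A x)⁻¹ b j := by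
  have hd : ∀ i j, DifferentiableAt ℝ (fun z => A z i j) x := fun i j =>
    (hA i j).differentiable one_ne_zero x
  have hd' : ∀ i j, DifferentiableAt ℝ (fun z => (A z)⁻¹ i j) x := fun i j =>
    (contDiff_inv_of_entries hA hdet i j).differentiable one_ne_zero x
  let B : Matrix (Fin k) (Fin k) ℝ := Matrix.of fun i j => fderiv ℝ (fun z => (A z)⁻¹ i j) x e
  let A' : Matrix (Fin k) (Fin k) ℝ := Matrix.of fun i j => fderiv ℝ (fun z => A z i j) x e
  have key : B * A x + (A x)⁻¹ * A' = 0 := by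
    ext i j
    have h1 : (fun z => ∑ l, (A z)⁻¹ i l * A z l j)
        = fun _ => (1 : Matrix (Fin k) (Fin k) ℝ) i j := by
      funext z
      rw [← Matrix.mul_apply, Matrix.nonsing_inv_mul _ (isUnit_iff_ne_zero.2 (hdet z))]
    have h2 := congrArg (fun f => fderiv ℝ f x e) h1
    simp only [fderiv_fun_const, Pi.zero_apply, zero_apply] at h2
    rw [fderiv_fun_sum (A := fun l z => (A z)⁻¹ i l * A z l j)
      fun l _ => (hd' i l).mul (hd l j)] at h2
    rw [Matrix.add_apply, Matrix.mul_apply, Matrix.mul_apply, ← Finset.sum_add_distrib,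
      Matrix.zero_apply, ← h2, sum_apply]
    refine Finset.sum_congr rfl fun l _ => ?_
    rw [fderiv_fun_mul (hd' i l) (hd l j)]
    simp [A', B]
    ring
  have hB : B = -((A x)⁻¹ * A' * (A x)⁻¹) := by
    have h3 : B * A x * (A x)⁻¹ = B :=
      Matrix.mul_nonsing_inv_cancel_right _ _ (isUnit_iff_ne_zero.2 (hdet x))
    rw [← h3, eq_neg_of_add_eq_zero_left key, Matrix.neg_mul]
  have := congrFun (congrFun hB i) j
  rw [Matrix.neg_apply, Matrix.mul_apply] at this
  simp only [Matrix.mul_apply, Finset.sum_mul] at this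
  rw [Finset.sum_comm] at this
  exact this

end Matrices

/-! ### Commuting time and space derivatives -/

section Flow

variable {F : Type*} [NormedAddCommGroup F] [NormedSpace ℝ F]
  {X : Type*} [NormedAddCommGroup X] [NormedSpace ℝ X]

/-- The space derivative of a slice `Φ t` is the joint derivative in the direction `(0, e)`. -/
lemma fderiv_slice {Φ : ℝ → X → F}
    (hΦ : ContDiff ℝ (⊤ : ℕ∞) fun p : ℝ × X => Φ p.1 p.2) (t : ℝ) (y e : X) :
    fderiv ℝ (Φ t) y e = fderiv ℝ (fun p : ℝ × X => Φ p.1 p.2) (t, y) (0, e) := by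
  have h := ((hΦ.differentiable (by simp) (t, y)).hasFDerivAt).comp y (hasFDerivAt_prodMk_right t y)
  have h2 : fderiv ℝ (Φ t) y = _ := h.fderiv
  rw [h2]; simp

lemma contDiff_slice {Φ : ℝ → X → F}
    (hΦ : ContDiff ℝ (⊤ : ℕ∞) fun p : ℝ × X => Φ p.1 p.2) (t : ℝ) :
    ContDiff ℝ (⊤ : ℕ∞) (Φ t) :=
  hΦ.comp (contDiff_prodMk_right t)

lemma contDiff_fderiv_slice {Φ : ℝ → X → F}
    (hΦ : ContDiff ℝ (⊤ : ℕ∞) fun p : ℝ × X => Φ p.1 p.2) (e : X) :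
    ContDiff ℝ (⊤ : ℕ∞) fun p : ℝ × X => fderiv ℝ (Φ p.1) p.2 e := by
  simp only [fderiv_slice hΦ]
  exact (hΦ.fderiv_right (by simp)).clm_apply contDiff_const

lemma contDiff_fderiv_const {f : X → F} (hf : ContDiff ℝ (⊤ : ℕ∞) f) (e : X) :
    ContDiff ℝ (⊤ : ℕ∞) fun y => fderiv ℝ f y e :=
  (hf.fderiv_right (by simp)).clm_apply contDiff_const

/-- Time and space derivatives commute: `∂_t ∂_e Φ = ∂_e ∂_t Φ`. -/
lemma hasDerivAt_fderiv_slice {Φ W : ℝ → X → F}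
    (hΦ : ContDiff ℝ (⊤ : ℕ∞) fun p : ℝ × X => Φ p.1 p.2)
    (hW : ∀ t y, HasDerivAt (fun s => Φ s y) (W t y) t) (t : ℝ) (y e : X) :
    HasDerivAt (fun s => fderiv ℝ (Φ s) y e) (fderiv ℝ (W t) y e) t := by
  set U : ℝ × X → F := fun p => Φ p.1 p.2 with hU
  have hW' : ∀ t y, W t y = fderiv ℝ U (t, y) (1, 0) := fun t y => by
    have h := ((hΦ.differentiable (by simp) (t, y)).hasFDerivAt).comp_hasDerivAt t
      ((hasDerivAt_id t).prodMk (hasDerivAt_const t y))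
    exact (hW t y).unique h
  have hd : Differentiable ℝ (fderiv ℝ U) :=
    (hΦ.fderiv_right (m := (⊤ : ℕ∞)) (by simp)).differentiable (by simp)
  have hsymm := (hΦ.contDiffAt (x := (t, y))).isSymmSndFDerivAt
    (by rw [minSmoothness_of_isRCLikeNormedField]; exact WithTop.coe_le_coe.2 (le_top : (2 : ℕ∞) ≤ ⊤))
  have hWt : W t = fun z => fderiv ℝ U (t, z) (1, 0) := funext (hW' t)
  have h1 : fderiv ℝ (W t) y e = fderiv ℝ (fderiv ℝ U) (t, y) (0, e) (1, 0) := by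
    have h := (((hd (t, y)).hasFDerivAt.comp y (hasFDerivAt_prodMk_right t y)).clm_apply
      (hasFDerivAt_const ((1, 0) : ℝ × X) y)).fderiv
    have h' : fderiv ℝ (fun z => fderiv ℝ U (t, z) (1, 0)) y = _ := h
    rw [hWt, h']
    simp
  have h2 : HasDerivAt (fun s => fderiv ℝ U (s, y)) (fderiv ℝ (fderiv ℝ U) (t, y) (1, 0)) t :=
    (hd (t, y)).hasFDerivAt.comp_hasDerivAt t
      ((hasDerivAt_id t).prodMk (hasDerivAt_const t y))
  have h3 : HasDerivAt (fun s => fderiv ℝ U (s, y) (0, e))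
      (fderiv ℝ (fderiv ℝ U) (t, y) (1, 0) (0, e)) t := by
    simpa using h2.clm_apply (hasDerivAt_const t ((0, e) : ℝ × X))
  rw [h1, hsymm.eq]
  exact h3.congr_of_eventuallyEq (Filter.Eventually.of_forall fun s => fderiv_slice hΦ s y e)

end Flow

/-! ### Expansion in the frame of tangent vectors and normal -/

/-- Inner products computed in a frame consisting of a unit vector `n` and a basis `e` of its
orthogonal complement, through the inverse of the Gram matrix of `e`. -/
lemma inner_expand_frame {e : Fin m → EuclideanSpace ℝ (Fin (m + 1))}
    {n : EuclideanSpace ℝ (Fin (m + 1))} (he : LinearIndependent ℝ e) (hn : ⟪n, n⟫ = 1)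
    (hne : ∀ i, ⟪n, e i⟫ = 0) (w u : EuclideanSpace ℝ (Fin (m + 1))) :
    ⟪w, u⟫ = ⟪w, n⟫ * ⟪n, u⟫ + ∑ k, ∑ l,
      (Matrix.of fun i j => ⟪e i, e j⟫)⁻¹ k l * ⟪w, e l⟫ * ⟪e k, u⟫ := by
  set g : Matrix (Fin m) (Fin m) ℝ := Matrix.of fun i j => ⟪e i, e j⟫ with hg
  have hdet : g.det ≠ 0 := (Matrix.posDef_gram_of_linearIndependent he).det_pos.ne'
  have hn0 : n ∉ Submodule.span ℝ (Set.range e) := fun hmem => by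
    have : ∀ x ∈ Submodule.span ℝ (Set.range e), ⟪n, x⟫ = 0 := fun x hx => by
      induction hx using Submodule.span_induction with
      | mem x hx => obtain ⟨i, rfl⟩ := hx; exact hne i
      | zero => simp
      | add x y _ _ hx hy => rw [inner_add_right, hx, hy, add_zero]
      | smul a x _ hx => rw [inner_smul_right, hx, mul_zero]
    exact one_ne_zero (hn.symm.trans (this n hmem))
  have hspan := (he.finCons hn0).span_eq_top_of_card_eq_finrank (by simp)
  set w' := ⟪w, n⟫ • n + ∑ k, (∑ l, g⁻¹ k l * ⟪w, e l⟫) • e k with hw'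
  have hz : ∀ x, ⟪w - w', x⟫ = 0 := fun x => by
    have hx : x ∈ Submodule.span ℝ (Set.range (Fin.cons n e : Fin (m + 1) → _)) := by
      rw [hspan]; trivial
    induction hx using Submodule.span_induction with
    | mem x hx =>
      obtain ⟨i, rfl⟩ := hx
      refine Fin.cases ?_ (fun i => ?_) i
      · have hen : ∀ i, ⟪e i, n⟫ = 0 := fun i => by rw [real_inner_comm, hne]
        rw [Fin.cons_zero, hw', inner_sub_left, inner_add_left, inner_smul_left, sum_inner, hn]
        simp [inner_smul_left, hen]
      · simp only [hw', inner_sub_left, inner_add_left, inner_smul_left, sum_inner,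
          Fin.cons_succ, hne, mul_zero, zero_add, conj_trivial, Finset.sum_mul]
        rw [Finset.sum_comm, sub_eq_zero]
        have h1 : ∀ l, ∑ k, g⁻¹ k l * ⟪w, e l⟫ * ⟪e k, e i⟫
            = ⟪w, e l⟫ * (1 : Matrix (Fin m) (Fin m) ℝ) i l := fun l => by
          rw [← Matrix.mul_nonsing_inv g (isUnit_iff_ne_zero.2 hdet), Matrix.mul_apply,
            Finset.mul_sum]
          refine Finset.sum_congr rfl fun k _ => ?_
          rw [hg, Matrix.of_apply, real_inner_comm (e i)]
          ring
        simp [h1, Matrix.one_apply]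
    | zero => simp
    | add x y _ _ hx hy => rw [inner_add_right, hx, hy, add_zero]
    | smul a x _ hx => rw [inner_smul_right, hx, mul_zero]
  have h := hz u
  rw [inner_sub_left, sub_eq_zero] at h
  rw [h, hw', inner_add_left, inner_smul_left, sum_inner]
  simp [inner_smul_left, Finset.sum_mul]

/-! ### Induced metric, Christoffel symbols and Laplacian of a parametrized hypersurface -/

section Geometry

variable {φ : (Fin m → ℝ) → EuclideanSpace ℝ (Fin (m + 1))}

lemma contDiff_pdv (hφ : ContDiff ℝ (⊤ : ℕ∞) φ) (i : Fin m) :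
    ContDiff ℝ (⊤ : ℕ∞) (pdv φ i) := contDiff_fderiv_const hφ _

lemma contDiff_met (hφ : ContDiff ℝ (⊤ : ℕ∞) φ) (i j : Fin m) :
    ContDiff ℝ (⊤ : ℕ∞) fun z => met φ z i j :=
  (contDiff_pdv hφ i).inner ℝ (contDiff_pdv hφ j)

lemma met_comm (y : Fin m → ℝ) (i j : Fin m) : met φ y i j = met φ y j i :=
  real_inner_comm (pdv φ j y) (pdv φ i y)

lemma metInv_comm (y : Fin m → ℝ) (i j : Fin m) : metInv φ y i j = metInv φ y j i := by
  have h : (met φ y).transpose = met φ y := Matrix.ext fun i j => met_comm y j i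
  have := congrFun (congrFun (Matrix.transpose_nonsing_inv (met φ y)) j) i
  rw [h] at this
  exact this

lemma met_det_pos {y : Fin m → ℝ} (himm : LinearIndependent ℝ fun i : Fin m => pdv φ i y) :
    0 < (met φ y).det :=
  (Matrix.posDef_gram_of_linearIndependent himm).det_pos

/-- Product rule for inner products of smooth maps, with the summands in the order of the factors. -/
lemma fderiv_inner_apply' {X : Type*} [NormedAddCommGroup X] [NormedSpace ℝ X]
    {a b : X → EuclideanSpace ℝ (Fin (m + 1))} (ha : ContDiff ℝ (⊤ : ℕ∞) a)
    (hb : ContDiff ℝ (⊤ : ℕ∞) b) (y u : X) :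
    fderiv ℝ (fun z => ⟪a z, b z⟫) y u = ⟪fderiv ℝ a y u, b y⟫ + ⟪a y, fderiv ℝ b y u⟫ := by
  rw [fderiv_inner_apply ℝ (ha.differentiable (by simp) y) (hb.differentiable (by simp) y),
    add_comm]

lemma pds_met (hφ : ContDiff ℝ (⊤ : ℕ∞) φ) (y : Fin m → ℝ) (i j k : Fin m) :
    pds (fun z => met φ z i j) k y
      = ⟪fderiv ℝ (pdv φ i) y (Pi.single k 1), pdv φ j y⟫
        + ⟪pdv φ i y, fderiv ℝ (pdv φ j) y (Pi.single k 1)⟫ :=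
  fderiv_inner_apply' (contDiff_pdv hφ i) (contDiff_pdv hφ j) y _

lemma fderiv_pdv_comm (hφ : ContDiff ℝ (⊤ : ℕ∞) φ) (y : Fin m → ℝ) (i j : Fin m) :
    fderiv ℝ (pdv φ j) y (Pi.single i 1) = fderiv ℝ (pdv φ i) y (Pi.single j 1) := by
  have hd : DifferentiableAt ℝ (fderiv ℝ φ) y :=
    (hφ.fderiv_right (m := (⊤ : ℕ∞)) (by simp)).differentiable (by simp) y
  have hsymm := (hφ.contDiffAt (x := y)).isSymmSndFDerivAt
    (by rw [minSmoothness_of_isRCLikeNormedField]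
        exact WithTop.coe_le_coe.2 (le_top : (2 : ℕ∞) ≤ ⊤))
  have h : ∀ i j : Fin m, fderiv ℝ (pdv φ j) y (Pi.single i 1)
      = fderiv ℝ (fderiv ℝ φ) y (Pi.single i 1) (Pi.single j 1) := fun i j => by
    have h := (hd.hasFDerivAt.clm_apply
      (hasFDerivAt_const (Pi.single j 1 : Fin m → ℝ) y)).fderiv
    have h' : fderiv ℝ (pdv φ j) y = _ := h
    rw [h']
    simp
  rw [h, h, hsymm.eq]

/-- `Γ^k_{ij} = g^{kl} ⟨∂_l φ, ∂_{ij} φ⟩` for the induced metric. -/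
lemma chrM_eq (hφ : ContDiff ℝ (⊤ : ℕ∞) φ) (y : Fin m → ℝ) (k i j : Fin m) :
    chrM φ k i j y
      = ∑ l, metInv φ y k l * ⟪pdv φ l y, fderiv ℝ (pdv φ j) y (Pi.single i 1)⟫ := by
  rw [chrM, Finset.mul_sum]
  refine Finset.sum_congr rfl fun l _ => ?_
  rw [pds_met hφ, pds_met hφ, pds_met hφ, fderiv_pdv_comm hφ y l i, fderiv_pdv_comm hφ y l j,
    fderiv_pdv_comm hφ y j i, real_inner_comm (pdv φ j y), real_inner_comm (pdv φ i y)]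
  ring

/-- The index computation behind the non-divergence form of the Laplacian: `d i a b` stands for
`∂_i g_{ab}`, `G` for the inverse metric and `h` for the differential. -/
lemma laplacian_index_identity (G : Fin m → Fin m → ℝ) (hG : ∀ i j, G i j = G j i)
    (d : Fin m → Fin m → Fin m → ℝ) (hd : ∀ i a b, d i a b = d i b a) (h : Fin m → ℝ) :
    (∑ i, ((1 / 2) * ∑ a, ∑ b, G a b * d i a b) * ∑ j, G i j * h j)
      - ∑ i, ∑ j, (∑ a, ∑ b, G i a * d i a b * G b j) * h j
      = -∑ i, ∑ j, G i j *
          ∑ k, ((1 / 2) * ∑ l, G k l * (d i l j + d j l i - d l i j)) * h k := by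
  -- all terms reduce to the contractions `g^{ij} g^{kl} (∂_l g_{ij}) h_k` and
  -- `g^{ij} g^{kl} (∂_i g_{lj}) h_k`
  have h1 : ∑ i, ((1 / 2) * ∑ a, ∑ b, G a b * d i a b) * ∑ j, G i j * h j
      = ∑ l, ∑ k, ∑ i, ∑ j, (1 / 2) * (G i j * G k l * d l i j * h k) := by
    refine Finset.sum_congr rfl fun l _ => ?_
    rw [Finset.mul_sum]
    refine Finset.sum_congr rfl fun k _ => ?_
    simp only [Finset.mul_sum, Finset.sum_mul]
    refine Finset.sum_congr rfl fun i _ => Finset.sum_congr rfl fun j _ => ?_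
    rw [hG l k]; ring
  have h2 : ∑ i, ∑ j, (∑ a, ∑ b, G i a * d i a b * G b j) * h j
      = ∑ i, ∑ k, ∑ j, ∑ l, G i j * G k l * d i l j * h k := by
    refine Finset.sum_congr rfl fun i _ => Finset.sum_congr rfl fun k _ => ?_
    simp only [Finset.sum_mul]
    refine Finset.sum_congr rfl fun j _ => Finset.sum_congr rfl fun l _ => ?_
    rw [hG l k, hd i j l]; ring
  have h3 : ∑ i, ∑ j, G i j * ∑ k, ((1 / 2) * ∑ l, G k l * (d i l j + d j l i - d l i j)) * h k
      = (1 / 2) * ∑ i, ∑ j, ∑ k, ∑ l, G i j * G k l * d i l j * h k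
        + (1 / 2) * ∑ i, ∑ j, ∑ k, ∑ l, G i j * G k l * d j l i * h k
        - (1 / 2) * ∑ i, ∑ j, ∑ k, ∑ l, G i j * G k l * d l i j * h k := by
    simp only [Finset.mul_sum, Finset.sum_mul, ← Finset.sum_add_distrib,
      ← Finset.sum_sub_distrib]
    refine Finset.sum_congr rfl fun i _ => Finset.sum_congr rfl fun j _ =>
      Finset.sum_congr rfl fun k _ => Finset.sum_congr rfl fun l _ => ?_
    ring
  have h4 : ∑ i, ∑ j, ∑ k, ∑ l, G i j * G k l * d j l i * h k
      = ∑ i, ∑ j, ∑ k, ∑ l, G i j * G k l * d i l j * h k := by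
    rw [Finset.sum_comm]
    refine Finset.sum_congr rfl fun i _ => Finset.sum_congr rfl fun j _ =>
      Finset.sum_congr rfl fun k _ => Finset.sum_congr rfl fun l _ => ?_
    rw [hG j i]
  have h5 : ∑ l, ∑ k, ∑ i, ∑ j, (1 / 2) * (G i j * G k l * d l i j * h k)
      = (1 / 2) * ∑ i, ∑ j, ∑ k, ∑ l, G i j * G k l * d l i j * h k := by
    simp only [Finset.mul_sum]
    calc _ = ∑ l, ∑ i, ∑ j, ∑ k, (1 / 2) * (G i j * G k l * d l i j * h k) := by
          refine Finset.sum_congr rfl fun l _ => ?_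
          rw [Finset.sum_comm]
          exact Finset.sum_congr rfl fun i _ => Finset.sum_comm
      _ = _ := by
          rw [Finset.sum_comm]
          refine Finset.sum_congr rfl fun i _ => ?_
          rw [Finset.sum_comm]
          exact Finset.sum_congr rfl fun j _ => Finset.sum_comm
  have h6 : ∑ i, ∑ k, ∑ j, ∑ l, G i j * G k l * d i l j * h k
      = ∑ i, ∑ j, ∑ k, ∑ l, G i j * G k l * d i l j * h k :=
    Finset.sum_congr rfl fun i _ => Finset.sum_comm
  rw [h1, h2, h3, h4, h5, h6]
  ring

/-- The Beltrami-Laplace operator in non-divergence form,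
`Δ h = g^{ij} (∂_{ij} h - Γ^k_{ij} ∂_k h)`. -/
lemma lapS_eq (hφ : ContDiff ℝ (⊤ : ℕ∞) φ)
    (himm : ∀ y, LinearIndependent ℝ fun i : Fin m => pdv φ i y)
    {h : (Fin m → ℝ) → ℝ} (hh : ContDiff ℝ (⊤ : ℕ∞) h) (y : Fin m → ℝ) :
    lapS φ h y = ∑ i, ∑ j, metInv φ y i j *
      (pds (fun z => pds h j z) i y - ∑ k, chrM φ k i j y * pds h k y) := by
  have hdet : ∀ z, (met φ z).det ≠ 0 := fun z => (met_det_pos (himm z)).ne'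
  have hg := contDiff_met hφ
  have hG : ∀ i j, Differentiable ℝ fun z => metInv φ z i j := fun i j =>
    (contDiff_inv_of_entries hg hdet i j).differentiable (by simp)
  have hp : ∀ j, Differentiable ℝ fun z => pds h j z := fun j =>
    (contDiff_fderiv_const hh _).differentiable (by simp)
  have hdd : DifferentiableAt ℝ (fun z => (met φ z).det) y :=
    (contDiff_det_of_entries hg).differentiable (by simp) y
  have hs : HasFDerivAt (sqrtDet φ) _ y := hdd.hasFDerivAt.sqrt (hdet y)
  have hs0 : sqrtDet φ y ≠ 0 := (Real.sqrt_pos.2 (met_det_pos (himm y))).ne'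
  have hsq : sqrtDet φ y * sqrtDet φ y = (met φ y).det :=
    Real.mul_self_sqrt (met_det_pos (himm y)).le
  have hsd : ∀ i, pds (sqrtDet φ) i y = sqrtDet φ y *
      ((1 / 2) * ∑ a, ∑ b, metInv φ y a b * pds (fun z => met φ z a b) i y) := fun i => by
    rw [pds, hs.fderiv]
    change (1 / (2 * sqrtDet φ y)) * fderiv ℝ (fun z => (met φ z).det) y (Pi.single i 1) = _
    rw [fderiv_det_apply (fun i j => (hg i j).differentiable (by simp) y) (hdet y), ← hsq]
    have : ∀ a b, (met φ y)⁻¹ b a = metInv φ y a b := fun a b => metInv_comm y b a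
    simp only [this]
    change _ = sqrtDet φ y * (1 / 2 * ∑ a, ∑ b, metInv φ y a b
      * fderiv ℝ (fun z => met φ z a b) y (Pi.single i 1))
    field_simp
  have hGd : ∀ i j k, pds (fun z => metInv φ z i j) k y
      = -∑ a, ∑ b, metInv φ y i a * pds (fun z => met φ z a b) k y * metInv φ y b j :=
    fun i j k => fderiv_inv_apply (fun i j => (hg i j).of_le (by simp)) hdet y _ i j
  have hterm : ∀ i, pds (fun z => sqrtDet φ z * ∑ j, metInv φ z i j * pds h j z) i y
      = sqrtDet φ y * (((1 / 2) * ∑ a, ∑ b, metInv φ y a b * pds (fun z => met φ z a b) i y)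
            * (∑ j, metInv φ y i j * pds h j y)
          - (∑ j, (∑ a, ∑ b, metInv φ y i a * pds (fun z => met φ z a b) i y * metInv φ y b j)
              * pds h j y)
          + ∑ j, metInv φ y i j * pds (fun z => pds h j z) i y) := fun i => by
    have hsum : Differentiable ℝ fun z => ∑ j, metInv φ z i j * pds h j z :=
      Differentiable.fun_sum fun j _ => (hG i j).mul (hp j)
    have e1 : pds (fun z => sqrtDet φ z * ∑ j, metInv φ z i j * pds h j z) i y
        = sqrtDet φ y * pds (fun z => ∑ j, metInv φ z i j * pds h j z) i y
          + (∑ j, metInv φ y i j * pds h j y) * pds (sqrtDet φ) i y := by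
      rw [pds, fderiv_fun_mul hs.differentiableAt (hsum y)]
      rfl
    have e2 : pds (fun z => ∑ j, metInv φ z i j * pds h j z) i y
        = ∑ j, (metInv φ y i j * pds (fun z => pds h j z) i y
          + pds h j y * pds (fun z => metInv φ z i j) i y) := by
      rw [pds, fderiv_fun_sum (A := fun j z => metInv φ z i j * pds h j z)
        fun j _ => (hG i j y).mul (hp j y), sum_apply]
      refine Finset.sum_congr rfl fun j _ => ?_
      rw [fderiv_fun_mul (hG i j y) (hp j y)]
      rfl
    rw [e1, e2, hsd, Finset.sum_add_distrib]
    simp only [hGd, mul_neg, Finset.sum_neg_distrib]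
    simp only [mul_comm (pds h _ y)]
    ring
  have key := laplacian_index_identity (metInv φ y) (metInv_comm y)
    (fun i a b => pds (fun z => met φ z a b) i y)
    (fun i a b => by simp only [met_comm _ a b]) (fun j => pds h j y)
  rw [lapS, Finset.sum_congr rfl fun i _ => hterm i, ← Finset.mul_sum, ← mul_assoc,
    inv_mul_cancel₀ hs0, one_mul, Finset.sum_add_distrib, Finset.sum_sub_distrib, key]
  unfold chrM
  simp only [mul_sub _ _ (∑ k, _), Finset.sum_sub_distrib]
  rw [sub_eq_neg_add]

end Geometry

/-! ### Index identities -/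

section Algebra

variable (G P VE : Fin m → Fin m → ℝ)

/-- The contribution of `∂_t g^{ij}`: with `VE i l = ⟨∂_i v, ∂_l φ⟩`, contracting it with `Π` gives
`-2 g^{ij} ⟨∂_i v, ∂_j N⟩`. -/
lemma metric_variation_identity (hG : ∀ i j, G i j = G j i) (hP : ∀ i j, P i j = P j i) :
    ∑ i, ∑ j, (-∑ a, ∑ b, G i a * (VE a b + VE b a) * G b j) * P i j
      = -∑ i, ∑ j, G i j * ((∑ k, ∑ l, G k l * VE j l * P i k)
          + ∑ k, ∑ l, G k l * VE i l * P j k) := by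
  set X := ∑ i, ∑ j, ∑ k, ∑ l, G i j * G k l * VE i l * P j k with hX
  have h1 : ∑ i, ∑ j, ∑ a, ∑ b, G i a * VE a b * G b j * P i j = X := by
    calc _ = ∑ i, ∑ a, ∑ j, ∑ b, G i a * VE a b * G b j * P i j :=
          Finset.sum_congr rfl fun i _ => Finset.sum_comm
      _ = _ := by
          rw [Finset.sum_comm]
          refine Finset.sum_congr rfl fun a _ => Finset.sum_congr rfl fun i _ =>
            Finset.sum_congr rfl fun j _ => Finset.sum_congr rfl fun b _ => ?_
          rw [hG a i, hG j b]; ring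
  have h2 : ∑ i, ∑ j, ∑ a, ∑ b, G i a * VE b a * G b j * P i j = X := by
    calc _ = ∑ i, ∑ j, ∑ b, ∑ a, G i a * VE b a * G b j * P i j :=
          Finset.sum_congr rfl fun i _ => Finset.sum_congr rfl fun j _ => Finset.sum_comm
      _ = ∑ j, ∑ b, ∑ i, ∑ a, G i a * VE b a * G b j * P i j := by
          rw [Finset.sum_comm]
          exact Finset.sum_congr rfl fun j _ => Finset.sum_comm
      _ = _ := by
          rw [Finset.sum_comm]
          refine Finset.sum_congr rfl fun b _ => Finset.sum_congr rfl fun j _ =>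
            Finset.sum_congr rfl fun i _ => Finset.sum_congr rfl fun a _ => ?_
          rw [hP i j]; ring
  have h3 : ∑ i, ∑ j, G i j * ∑ k, ∑ l, G k l * VE i l * P j k = X := by
    simp only [Finset.mul_sum, hX, mul_assoc]
  have h4 : ∑ i, ∑ j, G i j * ∑ k, ∑ l, G k l * VE j l * P i k = X := by
    rw [Finset.sum_comm, ← h3]
    exact Finset.sum_congr rfl fun i _ => Finset.sum_congr rfl fun j _ => by rw [hG i j]
  have h5 : ∑ i, ∑ j, (-∑ a, ∑ b, G i a * (VE a b + VE b a) * G b j) * P i j = -(X + X) := by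
    nth_rewrite 1 [← h1]
    rw [← h2]
    simp only [← Finset.sum_add_distrib, ← Finset.sum_neg_distrib, Finset.sum_mul]
    refine Finset.sum_congr rfl fun i _ => Finset.sum_congr rfl fun j _ =>
      Finset.sum_congr rfl fun k _ => Finset.sum_congr rfl fun l _ => ?_
    ring
  rw [h5]
  simp only [mul_add, Finset.sum_add_distrib, h3, h4]

/-- The componentwise form of `⟨v, Δ N⟩ = -v^⊥ |Π|² + (𝒟·Π)(v^⊤)`, with `f = v^⊥`, `U` the
components of `v^⊤`, `C k i j = Γ^k_{ij}` and `dP i j k = ∂_i Π_{jk}`. -/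
lemma laplace_normal_identity (hG : ∀ i j, G i j = G j i) (f : ℝ) (U : Fin m → ℝ)
    (C dP : Fin m → Fin m → Fin m → ℝ) :
    ∑ i, ∑ j, G i j * ((-(f * ∑ k, ∑ l, G k l * P i l * P j k)
        + ∑ k, U k * (dP i j k - ∑ l, C l i k * P j l)) - ∑ k, C k i j * ∑ a, U a * P k a)
      = -(f * ∑ i, ∑ j, ∑ k, ∑ l, G i k * G j l * P i j * P k l)
        + ∑ k, (∑ i, ∑ j, G i j * (dP i j k - ∑ l, C l i j * P l k - ∑ l, C l i k * P j l))
            * U k := by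
  have h1 : ∑ i, ∑ j, G i j * ∑ k, ∑ l, G k l * P i l * P j k
      = ∑ i, ∑ j, ∑ k, ∑ l, G i k * G j l * P i j * P k l := by
    simp only [Finset.mul_sum]
    refine Finset.sum_congr rfl fun i _ => ?_
    calc _ = ∑ k, ∑ j, ∑ l, G i k * (G l j * P i j * P k l) :=
          Finset.sum_congr rfl fun k _ => Finset.sum_comm
      _ = _ := by
          rw [Finset.sum_comm]
          refine Finset.sum_congr rfl fun j _ => Finset.sum_congr rfl fun k _ =>
            Finset.sum_congr rfl fun l _ => ?_
          rw [hG l j]; ring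
  have h2 : ∀ i j, G i j * ((-(f * ∑ k, ∑ l, G k l * P i l * P j k)
        + ∑ k, U k * (dP i j k - ∑ l, C l i k * P j l)) - ∑ k, C k i j * ∑ a, U a * P k a)
      = -(f * (G i j * ∑ k, ∑ l, G k l * P i l * P j k))
        + ∑ k, G i j * (dP i j k - ∑ l, C l i j * P l k - ∑ l, C l i k * P j l) * U k := by
    intro i j
    have h3 : ∑ k, C k i j * ∑ a, U a * P k a = ∑ a, (∑ k, C k i j * P k a) * U a := by
      simp only [Finset.mul_sum, Finset.sum_mul]
      rw [Finset.sum_comm]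
      exact Finset.sum_congr rfl fun a _ => Finset.sum_congr rfl fun k _ => by ring
    rw [h3, add_sub_assoc, ← Finset.sum_sub_distrib, mul_add]
    congr 1
    · ring
    · rw [Finset.mul_sum]
      exact Finset.sum_congr rfl fun k _ => by ring
  simp only [h2, Finset.sum_add_distrib, Finset.sum_neg_distrib, ← Finset.mul_sum, h1,
    Finset.sum_mul]
  congr 1
  calc _ = ∑ i, ∑ k, ∑ j, G i j
          * (dP i j k - ∑ l, C l i j * P l k - ∑ l, C l i k * P j l) * U k :=
        Finset.sum_congr rfl fun i _ => Finset.sum_comm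
    _ = _ := Finset.sum_comm

end Algebra

/-! ### Evolution of the mean curvature -/

/-- Let `∂Ω_t ⊂ ℝⁿ` be a family of smooth hypersurfaces, parametrized by
`φ(t,·)` moving with the smooth velocity field `v`, with outward unit normal `N` and mean
curvature `κ`.  Then along particle paths `D_t κ = -Δ_{∂Ω_t} v^⊥ - v^⊥ |Π|² + (𝒟·Π)(v^⊤)`,
where `v^⊥ = v·N` and `v^⊤` is the tangential part of `v`. -/
theorem stmt_7 (φ : ℝ → (Fin m → ℝ) → EuclideanSpace ℝ (Fin (m + 1)))
    (v : ℝ → EuclideanSpace ℝ (Fin (m + 1)) → EuclideanSpace ℝ (Fin (m + 1)))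
    (N : ℝ → (Fin m → ℝ) → EuclideanSpace ℝ (Fin (m + 1)))
    (hφ : ContDiff ℝ (⊤ : ℕ∞) (fun p : ℝ × (Fin m → ℝ) => φ p.1 p.2))
    (hv : ContDiff ℝ (⊤ : ℕ∞) (fun p : ℝ × EuclideanSpace ℝ (Fin (m + 1)) => v p.1 p.2))
    (hN : ContDiff ℝ (⊤ : ℕ∞) (fun p : ℝ × (Fin m → ℝ) => N p.1 p.2))
    (hflow : ∀ t y, HasDerivAt (fun s => φ s y) (v t (φ t y)) t)
    (hunit : ∀ t y, ‖N t y‖ = 1)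
    (hperp : ∀ t y i, ⟪N t y, pdv (φ t) i y⟫ = 0)
    (himm : ∀ t y, LinearIndependent ℝ (fun i : Fin m => pdv (φ t) i y))
    (t : ℝ) (y : Fin m → ℝ) :
    deriv (fun s => kap (φ s) (N s) y) t
      = -(lapS (φ t) (fun z => ⟪v t (φ t z), N t z⟫) y)
        - ⟪v t (φ t y), N t y⟫ * sffNormSq (φ t) (N t) y
        + ∑ k, divSff (φ t) (N t) k y *
            (∑ j, metInv (φ t) y k j * ⟪v t (φ t y), pdv (φ t) j y⟫) := by
  have hφt := contDiff_slice hφ t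
  have hNt := contDiff_slice hN t
  -- the velocity in surface coordinates
  set W : ℝ → (Fin m → ℝ) → EuclideanSpace ℝ (Fin (m + 1)) := fun s z => v s (φ s z) with hWdef
  have hW : ContDiff ℝ (⊤ : ℕ∞) fun p : ℝ × (Fin m → ℝ) => W p.1 p.2 :=
    hv.comp (contDiff_fst.prodMk hφ)
  have hWt := contDiff_slice hW t
  have hφ1 : ∀ i, ContDiff ℝ (⊤ : ℕ∞) fun p : ℝ × (Fin m → ℝ) => pdv (φ p.1) i p.2 :=
    fun i => contDiff_fderiv_slice hφ _
  have hN1 : ∀ i, ContDiff ℝ (⊤ : ℕ∞) (pdv (N t) i) := contDiff_pdv hNt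
  have hW1 : ∀ i, ContDiff ℝ (⊤ : ℕ∞) (pdv (W t) i) := contDiff_pdv hWt
  have he' : ∀ t i y, HasDerivAt (fun s => pdv (φ s) i y) (pdv (W t) i y) t :=
    fun t i y => hasDerivAt_fderiv_slice hφ hflow t y _
  have hE' : ∀ i j, HasDerivAt (fun s => fderiv ℝ (pdv (φ s) j) y (Pi.single i 1))
      (fderiv ℝ (pdv (W t) j) y (Pi.single i 1)) t :=
    fun i j => hasDerivAt_fderiv_slice (hφ1 j) (fun t y => he' t j y) t y _
  obtain ⟨Nt, hN'⟩ : ∃ Nt, HasDerivAt (fun s => N s y) Nt t :=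
    ⟨_, ((hN.comp (contDiff_prodMk_left y)).differentiable (by simp) t).hasDerivAt⟩
  have hnn : ∀ t y, ⟪N t y, N t y⟫ = 1 := fun t y => by
    rw [real_inner_self_eq_norm_sq, hunit, one_pow]
  -- abbreviations for the values at the fixed point
  set f : ℝ := ⟪W t y, N t y⟫ with hf
  set e : Fin m → EuclideanSpace ℝ (Fin (m + 1)) := fun i => pdv (φ t) i y with he
  set E : Fin m → Fin m → EuclideanSpace ℝ (Fin (m + 1)) :=
    fun i j => fderiv ℝ (pdv (φ t) j) y (Pi.single i 1) with hE
  set n : EuclideanSpace ℝ (Fin (m + 1)) := N t y with hn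
  set Nd : Fin m → EuclideanSpace ℝ (Fin (m + 1)) := fun i => pdv (N t) i y with hNd
  set NN : Fin m → Fin m → EuclideanSpace ℝ (Fin (m + 1)) :=
    fun i j => fderiv ℝ (pdv (N t) j) y (Pi.single i 1) with hNN
  set Wd : Fin m → EuclideanSpace ℝ (Fin (m + 1)) := fun i => pdv (W t) i y with hWd
  set WW : Fin m → Fin m → EuclideanSpace ℝ (Fin (m + 1)) :=
    fun i j => fderiv ℝ (pdv (W t) j) y (Pi.single i 1) with hWW
  set G : Fin m → Fin m → ℝ := metInv (φ t) y with hG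
  set P : Fin m → Fin m → ℝ := fun i j => sffM (φ t) (N t) i j y with hP
  set C : Fin m → Fin m → Fin m → ℝ := fun k i j => chrM (φ t) k i j y with hC
  set dP : Fin m → Fin m → Fin m → ℝ := fun i j k => pds (sffM (φ t) (N t) j k) i y with hdP
  set U : Fin m → ℝ := fun k => ∑ j, G k j * ⟪W t y, e j⟫ with hU
  have hGs : ∀ i j, G i j = G j i := metInv_comm y
  have hEs : ∀ i j, E i j = E j i := fderiv_pdv_comm hφt y
  have hPE : ∀ i j, P i j = -⟪E i j, n⟫ := fun i j => rfl
  have hPs : ∀ i j, P i j = P j i := fun i j => by rw [hPE, hPE, hEs]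
  have hCE : ∀ k i j, C k i j = ∑ l, G k l * ⟪E i j, e l⟫ := fun k i j => by
    simp only [hC, chrM_eq hφt]
    exact Finset.sum_congr rfl fun l _ => by rw [real_inner_comm]
  have hframe : ∀ w u, ⟪w, u⟫ = ⟪w, n⟫ * ⟪n, u⟫ + ∑ k, ∑ l, G k l * ⟪w, e l⟫ * ⟪e k, u⟫ :=
    inner_expand_frame (himm t y) (hnn t y) (hperp t y)
  -- first derivatives of the normal, from `⟨N, N⟩ = 1` and `⟨N, ∂_j φ⟩ = 0`
  have hNdN : ∀ z i, ⟪pdv (N t) i z, N t z⟫ = 0 := fun z i => by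
    have h := fderiv_inner_apply' hNt hNt z (Pi.single i 1)
    simp only [hnn, fderiv_fun_const, Pi.zero_apply, zero_apply] at h
    rw [real_inner_comm _ (N t z)] at h
    change 0 = ⟪pdv (N t) i z, N t z⟫ + ⟪pdv (N t) i z, N t z⟫ at h
    linarith
  have hNde : ∀ z i j, ⟪pdv (N t) i z, pdv (φ t) j z⟫ = sffM (φ t) (N t) i j z := fun z i j => by
    have h := fderiv_inner_apply' hNt (contDiff_pdv hφt j) z (Pi.single i 1)
    simp only [hperp, fderiv_fun_const, Pi.zero_apply, zero_apply] at h
    rw [real_inner_comm _ (N t z)] at h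
    change 0 = ⟪pdv (N t) i z, _⟫ + _ at h
    rw [sffM]
    linarith
  -- second derivatives of the normal
  have hNNn : ∀ i j, ⟪NN i j, n⟫ = -⟪Nd i, Nd j⟫ := fun i j => by
    have h := fderiv_inner_apply' (hN1 j) hNt y (Pi.single i 1)
    simp only [hNdN, fderiv_fun_const, Pi.zero_apply, zero_apply] at h
    rw [real_inner_comm (fderiv ℝ (N t) y _)] at h
    change 0 = ⟪NN i j, n⟫ + ⟪Nd i, Nd j⟫ at h
    linarith
  have hNNe : ∀ i j k, ⟪NN i j, e k⟫ = dP i j k - ⟪Nd j, E i k⟫ := fun i j k => by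
    have h := fderiv_inner_apply' (hN1 j) (contDiff_pdv hφt k) y (Pi.single i 1)
    simp only [hNde] at h
    change dP i j k = ⟪NN i j, e k⟫ + ⟪Nd j, E i k⟫ at h
    linarith
  -- time derivative of the normal
  have hNtn : ⟪n, Nt⟫ = 0 := by
    have h := hN'.inner ℝ hN'
    simp only [hnn] at h
    have h' := (hasDerivAt_const t (1 : ℝ)).unique h
    rw [real_inner_comm n Nt] at h'
    linarith
  have hNte : ∀ i, ⟪e i, Nt⟫ = -⟪Wd i, n⟫ := fun i => by
    have h := hN'.inner ℝ (he' t i y)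
    simp only [hperp] at h
    have h' := (hasDerivAt_const t (0 : ℝ)).unique h
    change 0 = ⟪n, Wd i⟫ + ⟪Nt, e i⟫ at h'
    rw [real_inner_comm, real_inner_comm n]
    linarith
  -- expansions in the frame `e, n`
  have hen : ∀ i, ⟪n, e i⟫ = 0 := hperp t y
  have hE_Nt : ∀ i j, ⟪E i j, Nt⟫ = -∑ k, C k i j * ⟪Wd k, n⟫ := fun i j => by
    rw [hframe, hNtn, mul_zero, zero_add, ← Finset.sum_neg_distrib]
    refine Finset.sum_congr rfl fun k _ => ?_
    rw [hNte, ← Finset.sum_mul, ← hCE]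
    ring
  have hNd_n : ∀ i, ⟪n, Nd i⟫ = 0 := fun i => by rw [real_inner_comm]; exact hNdN y i
  have hNd_e : ∀ i j, ⟪e j, Nd i⟫ = P i j := fun i j => by
    rw [real_inner_comm]; exact hNde y i j
  have hframeNd : ∀ w j, ⟪w, Nd j⟫ = ∑ k, ∑ l, G k l * ⟪w, e l⟫ * P j k := fun w j => by
    rw [hframe, hNd_n, mul_zero, zero_add]
    simp only [hNd_e]
  have hE_Nd : ∀ i j k, ⟪Nd j, E i k⟫ = ∑ l, C l i k * P j l := fun i j k => by
    rw [real_inner_comm, hframeNd]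
    simp only [hCE, Finset.sum_mul]
  have hW_Nd : ∀ k, ⟪W t y, Nd k⟫ = ∑ a, U a * P k a := fun k => by
    rw [hframeNd]
    simp only [hU, Finset.sum_mul]
  have hNd_Nd : ∀ i j, ⟪Nd i, Nd j⟫ = ∑ k, ∑ l, G k l * P i l * P j k := fun i j => by
    rw [hframeNd]
    simp only [real_inner_comm, hNd_e]
  have hW_NN : ∀ i j, ⟪W t y, NN i j⟫ = -(f * ∑ k, ∑ l, G k l * P i l * P j k)
      + ∑ k, U k * (dP i j k - ∑ l, C l i k * P j l) := fun i j => by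
    rw [hframe, real_inner_comm _ n, hNNn, hNd_Nd]
    congr 1
    · rw [← hf]; ring
    · refine Finset.sum_congr rfl fun k _ => ?_
      rw [real_inner_comm, hNNe, hE_Nd, ← Finset.sum_mul]
  -- derivatives of the normal velocity
  have hf1 : ∀ z i, pds (fun z => ⟪W t z, N t z⟫) i z
      = ⟪pdv (W t) i z, N t z⟫ + ⟪W t z, pdv (N t) i z⟫ :=
    fun z i => fderiv_inner_apply' hWt hNt z _
  have hf2 : ∀ i j, pds (fun z => pds (fun z => ⟪W t z, N t z⟫) j z) i y
      = ⟪WW i j, n⟫ + (⟪Wd j, Nd i⟫ + ⟪Wd i, Nd j⟫) + ⟪W t y, NN i j⟫ := fun i j => by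
    simp only [hf1]
    have hd1 : ContDiff ℝ (⊤ : ℕ∞) fun z => ⟪pdv (W t) j z, N t z⟫ := (hW1 j).inner ℝ hNt
    have hd2 : ContDiff ℝ (⊤ : ℕ∞) fun z => ⟪W t z, pdv (N t) j z⟫ := hWt.inner ℝ (hN1 j)
    rw [pds, fderiv_fun_add (hd1.differentiable (by simp) y) (hd2.differentiable (by simp) y),
      add_apply, fderiv_inner_apply' (hW1 j) hNt, fderiv_inner_apply' hWt (hN1 j)]
    simp only [hWW, hn, hWd, hNd, hNN, pdv]
    ring
  -- time derivatives of `g^{ij}` and of `κ`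
  have he_s : ∀ i, ContDiff ℝ (⊤ : ℕ∞) fun s => pdv (φ s) i y :=
    fun i => (hφ1 i).comp (contDiff_prodMk_left y)
  have hg_s : ∀ i j, ContDiff ℝ (⊤ : ℕ∞) fun s => met (φ s) y i j :=
    fun i j => (he_s i).inner ℝ (he_s j)
  have hdet_s : ∀ s, (met (φ s) y).det ≠ 0 := fun s => (met_det_pos (himm s y)).ne'
  have hg' : ∀ a b, fderiv ℝ (fun s => met (φ s) y a b) t 1 = ⟪Wd a, e b⟫ + ⟪Wd b, e a⟫ :=
    fun a b => by
      have h : HasDerivAt (fun s => met (φ s) y a b) (⟪e a, Wd b⟫ + ⟪Wd a, e b⟫) t :=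
        (he' t a y).inner ℝ (he' t b y)
      rw [fderiv_apply_one_eq_deriv, h.deriv, real_inner_comm (Wd b), add_comm]
  have hG' : ∀ i j, HasDerivAt (fun s => metInv (φ s) y i j)
      (-∑ a, ∑ b, G i a * (⟪Wd a, e b⟫ + ⟪Wd b, e a⟫) * G b j) t := fun i j => by
    have h1 := fderiv_inv_apply (fun i j => (hg_s i j).of_le (by simp)) hdet_s t 1 i j
    simp only [hg'] at h1
    have h2 := ((contDiff_inv_of_entries hg_s hdet_s i j).differentiable (by simp) t).hasDerivAt
    rw [← fderiv_apply_one_eq_deriv, h1] at h2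
    exact h2
  have hP' : ∀ i j, HasDerivAt (fun s => sffM (φ s) (N s) i j y)
      (-(⟪E i j, Nt⟫ + ⟪WW i j, n⟫)) t := fun i j => ((hE' i j).inner ℝ hN').fun_neg
  have hk : HasDerivAt (fun s => kap (φ s) (N s) y) _ t :=
    HasDerivAt.fun_sum fun i _ => HasDerivAt.fun_sum fun j _ => (hG' i j).mul (hP' i j)
  have hI1 := metric_variation_identity G P (fun i l => ⟪Wd i, e l⟫) hGs hPs
  have hI2 := laplace_normal_identity G P hGs f U C dP
  rw [hk.deriv, lapS_eq hφt (himm t) (hWt.inner ℝ hNt)]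
  simp only [hf2]
  simp only [hf1]
  change ∑ i, ∑ j, ((-∑ a, ∑ b, G i a * (⟪Wd a, e b⟫ + ⟪Wd b, e a⟫) * G b j) * P i j
      + G i j * -(⟪E i j, Nt⟫ + ⟪WW i j, n⟫))
    = -(∑ i, ∑ j, G i j * (⟪WW i j, n⟫ + (⟪Wd j, Nd i⟫ + ⟪Wd i, Nd j⟫) + ⟪W t y, NN i j⟫
        - ∑ k, C k i j * (⟪Wd k, n⟫ + ⟪W t y, Nd k⟫)))
      - f * (∑ i, ∑ j, ∑ k, ∑ l, G i k * G j l * P i j * P k l)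
      + ∑ k, (∑ i, ∑ j, G i j * (dP i j k - ∑ l, C l i j * P l k - ∑ l, C l i k * P j l)) * U k
  simp only [← hframeNd] at hI1
  simp only [← hW_NN, ← hW_Nd] at hI2
  rw [sub_eq_add_neg, add_assoc, ← hI2]
  simp only [Finset.sum_add_distrib, hI1, hE_Nt]
  simp only [← Finset.sum_neg_distrib, ← Finset.sum_add_distrib]
  refine Finset.sum_congr rfl fun i _ => Finset.sum_congr rfl fun j _ => ?_
  simp only [mul_add, Finset.sum_add_distrib, Finset.sum_neg_distrib]
  ring
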